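/- For all n a b : ℕ, SamePerm (n+1) a b if and only if SamePerm (2n+1) (2a) (2b); i.e., two subpermutations of π_T of length n+1 are equal if and only if their images under the Thue–Morse morphism (the subpermutations of length 2n+1 at the doubled positions) are equal. -/

import Mathlib

/-!
Write `T` for the Thue-Morse word. The order of the shifts at doubled positions is computed from
the order of the original shifts and from single letters of `T`:

* even/even: `2x ≺ 2y ↔ x ≺ y`, since the morphism `0 ↦ 01`, `1 ↦ 10` preserves the
  lexicographic order (`prec_double`);
* odd/odd: the shift at `2x+1` is the complement of `T x` followed by the shift at `2(x+1)`, so the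
  order of `x, y` is kept if `T x = T y` and is decided by the letters otherwise
  (`prec_odd_odd`);
* even/odd: because `T` has no cube `000` or `111`, the order of `2x` and `2y+1` depends on `T y`
  alone (`prec_even_odd`, `prec_odd_even`).

Finally `T x = 0 ↔ x ≺ x+1` (`tm_eq_zero_iff`), so a subpermutation of length `n+1` determines its
first `n` letters. These are exactly the letters needed for the odd positions `2i+1 < 2n+1`, hence
it determines its image. Conversely, the subpermutation is read off the even positions of its image.
-/

/-- The Thue-Morse word: parity of the binary digit sum. -/
def TM (n : ℕ) : ℕ := (Nat.digits 2 n).sum % 2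

/-- `Prec a b` : the shift of the Thue-Morse word at `a` is lexicographically
smaller than the shift at `b`. -/
def Prec (a b : ℕ) : Prop :=
  ∃ c : ℕ, (∀ i < c, TM (a + i) = TM (b + i)) ∧ TM (a + c) < TM (b + c)

/-- The subpermutations of `π_T` of length `N` starting at `a` and `b` coincide. -/
def SamePerm (N a b : ℕ) : Prop :=
  ∀ i < N, ∀ j < N, (Prec (a + i) (a + j) ↔ Prec (b + i) (b + j))

open scoped Classical in
/-- `P a N i` : the 0-indexed rank of position `a+i` within the subpermutation
`π_T[a, a+N-1]`. -/
noncomputable def P (a N i : ℕ) : ℕ :=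
  ((Finset.range N).filter (fun j => Prec (a + j) (a + i))).card

/-- The subpermutations `π_T[a,a+N-1]` and `π_T[b,b+N-1]` have the same form. -/
def SameForm (N a b : ℕ) : Prop :=
  ∀ i < N - 1, (Prec (a + i) (a + (i + 1))) ↔ (Prec (b + i) (b + (i + 1)))

/-- The subpermutation `π_T[a,a+N-1]` is of type `k`. -/
def TypeK (k N a : ℕ) : Prop :=
  1 ≤ k ∧ 2 * k ≤ N ∧
  ∃ ε : ℤ, (ε = 1 ∨ ε = -1) ∧
    ∀ i < k, (P a N i : ℤ) = P a N (N - k + i) + ε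

/-- Positions `a` and `b` form a complementary pair of type `k` of length `N`. -/
def CompPair (k N a b : ℕ) : Prop :=
  1 ≤ k ∧ 2 * k ≤ N ∧
  ∃ ε : ℤ, (ε = 1 ∨ ε = -1) ∧
    (∀ i < k,
      (P a N i : ℤ) = P a N (N - k + i) + ε ∧
      (P b N i : ℤ) = P a N (N - k + i) ∧
      (P b N (N - k + i) : ℤ) = P a N i) ∧
    (∀ j, k ≤ j → j < N - k → P b N j = P a N j)

/-- The permutation complexity of the Thue-Morse word: the number of distinct
subpermutations of `π_T` of length `N`. -/
noncomputable def tau (N : ℕ) : ℕ :=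
  Set.ncard (Set.range (fun a : ℕ => fun i j : Fin N => Prec (a + i) (a + j)))

theorem tm_lt_two (n : ℕ) : TM n < 2 := Nat.mod_lt _ (by norm_num)

theorem tm_even (n : ℕ) : TM (2 * n) = TM n := by
  rcases Nat.eq_zero_or_pos n with rfl | h
  · rfl
  · simp [TM, Nat.digits_def' (b := 2) (n := 2 * n) (by norm_num) (by omega)]

theorem tm_odd (n : ℕ) : TM (2 * n + 1) = 1 - TM n := by
  have h : (2 * n + 1) / 2 = n := by omega
  have h' : (2 * n + 1) % 2 = 1 := by omega
  simp only [TM, Nat.digits_def' (b := 2) (n := 2 * n + 1) (by norm_num) (by omega),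
    List.sum_cons, h, h']
  omega

/-- The Thue-Morse word contains neither `000` nor `111`. -/
theorem tm_no_cube (n : ℕ) : ¬ (TM n = TM (n + 1) ∧ TM (n + 1) = TM (n + 2)) := by
  rintro ⟨h1, h2⟩
  -- One of the two adjacent pairs is the image `01` or `10` of a letter.
  rcases Nat.even_or_odd' n with ⟨m, rfl | rfl⟩
  · have := tm_lt_two m
    rw [tm_even, tm_odd] at h1
    omega
  · have := tm_lt_two (m + 1)
    rw [show 2 * m + 1 + 1 = 2 * (m + 1) by ring, show 2 * m + 1 + 2 = 2 * (m + 1) + 1 by ring,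
      tm_even, tm_odd] at h2
    omega

/-- Lexicographic comparison: first letter, then tail. -/
theorem prec_iff (x y : ℕ) :
    Prec x y ↔ TM x < TM y ∨ (TM x = TM y ∧ Prec (x + 1) (y + 1)) := by
  constructor
  · rintro ⟨c, h, hc⟩
    cases c with
    | zero => exact Or.inl hc
    | succ c =>
      refine Or.inr ⟨h 0 (by omega), c, fun i hi => ?_, ?_⟩
      · have := h (i + 1) (by omega)
        rwa [← add_assoc, ← add_assoc, add_right_comm x, add_right_comm y] at this
      · rwa [← add_assoc, ← add_assoc, add_right_comm x, add_right_comm y] at hc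
  · rintro (h | ⟨h0, c, h, hc⟩)
    · exact ⟨0, by simp, h⟩
    · refine ⟨c + 1, fun i hi => ?_, ?_⟩
      · cases i with
        | zero => exact h0
        | succ i =>
          have := h i (by omega)
          rwa [← add_assoc, ← add_assoc, add_right_comm x, add_right_comm y]
      · rwa [← add_assoc, ← add_assoc, add_right_comm x, add_right_comm y]

/-- A letter is recovered from the order of two consecutive shifts. -/
theorem tm_eq_zero_iff (x : ℕ) : TM x = 0 ↔ Prec x (x + 1) := by
  have h0 := tm_lt_two x
  have h1 := tm_lt_two (x + 1)
  have h2 := tm_lt_two (x + 2)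
  have h3 := tm_no_cube x
  rw [prec_iff, prec_iff (x + 1) (x + 1 + 1)]
  simp only [add_assoc, Nat.reduceAdd]
  constructor
  · intro h
    omega
  · rintro (h | ⟨h, h' | ⟨h', -⟩⟩) <;> omega

/-- The Thue-Morse morphism preserves the lexicographic order of the shifts. -/
theorem prec_double (x y : ℕ) : Prec (2 * x) (2 * y) ↔ Prec x y := by
  constructor
  · rintro ⟨c, h, hc⟩
    -- The first difference occurs at an even offset: the images `01`, `10` differ at once.
    rcases Nat.even_or_odd' c with ⟨d, rfl | rfl⟩
    · refine ⟨d, fun i hi => ?_, ?_⟩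
      · have := h (2 * i) (by omega)
        rwa [← mul_add, ← mul_add, tm_even, tm_even] at this
      · rwa [← mul_add, ← mul_add, tm_even, tm_even] at hc
    · have := h (2 * d) (by omega)
      rw [← mul_add, ← mul_add, tm_even, tm_even] at this
      rw [← add_assoc, ← add_assoc, ← mul_add, ← mul_add, tm_odd, tm_odd, this] at hc
      exact absurd hc (lt_irrefl _)
  · rintro ⟨c, h, hc⟩
    refine ⟨2 * c, fun i hi => ?_, ?_⟩
    · rcases Nat.even_or_odd' i with ⟨d, rfl | rfl⟩
      · rw [← mul_add, ← mul_add, tm_even, tm_even]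
        exact h d (by omega)
      · rw [← add_assoc, ← add_assoc, ← mul_add, ← mul_add, tm_odd, tm_odd, h d (by omega)]
    · rwa [← mul_add, ← mul_add, tm_even, tm_even]

theorem prec_odd_odd (x y : ℕ) :
    Prec (2 * x + 1) (2 * y + 1) ↔ TM y < TM x ∨ (TM x = TM y ∧ Prec x y) := by
  have hx := tm_lt_two x
  have hy := tm_lt_two y
  rw [prec_iff, show 2 * x + 1 + 1 = 2 * (x + 1) by ring, show 2 * y + 1 + 1 = 2 * (y + 1) by ring,
    prec_double, tm_odd, tm_odd, prec_iff x y]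
  by_cases h : Prec (x + 1) (y + 1) <;> simp only [h, and_true, and_false, or_false] <;> omega

/-- If `T x = T y`, the shifts at `2x` and `2y+1` differ in the first letter. Otherwise, say with
`T x = 0` and `T y = 1`, the shift at `2x` begins with `0101` or `0110`, while the one at `2y+1`
begins with `00` or `0100`. -/
theorem prec_even_odd (x y : ℕ) : Prec (2 * x) (2 * y + 1) ↔ TM y = 0 := by
  have hx := tm_lt_two x
  have hy := tm_lt_two y
  have hx1 := tm_lt_two (x + 1)
  have hy1 := tm_lt_two (y + 1)
  have hy2 := tm_lt_two (y + 2)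
  have hc := tm_no_cube y
  rw [prec_iff, prec_iff (2 * x + 1), show 2 * x + 1 + 1 = 2 * (x + 1) by ring,
    show 2 * y + 1 + 1 = 2 * (y + 1) by ring, prec_iff (2 * (x + 1)), prec_iff (2 * (x + 1) + 1),
    show 2 * (y + 1) + 1 + 1 = 2 * (y + 2) by ring]
  simp only [tm_even, tm_odd]
  constructor
  · rintro (h | ⟨h, h' | ⟨h', h'' | ⟨h'', h3 | ⟨h3, -⟩⟩⟩⟩) <;> omega
  · intro h
    omega

theorem prec_odd_even (x y : ℕ) : Prec (2 * y + 1) (2 * x) ↔ TM y = 1 := by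
  have hx := tm_lt_two x
  have hy := tm_lt_two y
  have hx1 := tm_lt_two (x + 1)
  have hy1 := tm_lt_two (y + 1)
  have hy2 := tm_lt_two (y + 2)
  have hc := tm_no_cube y
  rw [prec_iff, prec_iff (2 * y + 1 + 1), show 2 * y + 1 + 1 = 2 * (y + 1) by ring,
    show 2 * x + 1 + 1 = 2 * (x + 1) by ring, prec_iff (2 * (y + 1) + 1),
    show 2 * (y + 1) + 1 + 1 = 2 * (y + 2) by ring, prec_iff (2 * (y + 2))]
  simp only [tm_even, tm_odd]
  constructor
  · rintro (h | ⟨h, h' | ⟨h', h'' | ⟨h'', h3 | ⟨h3, -⟩⟩⟩⟩) <;> omega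
  · intro h
    omega

/-- Two subpermutations of `π_T` of length `n+1` are equal iff their images under
the Thue-Morse morphism (length `2n+1`, doubled positions) are equal. -/
theorem samePerm_iff_samePerm_double (n a b : ℕ) :
    SamePerm (n + 1) a b ↔ SamePerm (2 * n + 1) (2 * a) (2 * b) := by
  constructor
  · intro H
    have letters : ∀ i < n, TM (a + i) = TM (b + i) := fun i hi => by
      have h := H i (by omega) (i + 1) (by omega)
      rw [← add_assoc, ← add_assoc, ← tm_eq_zero_iff, ← tm_eq_zero_iff] at h
      have := tm_lt_two (a + i)
      have := tm_lt_two (b + i)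
      omega
    intro i hi j hj
    rcases Nat.even_or_odd' i with ⟨k, rfl | rfl⟩ <;>
      rcases Nat.even_or_odd' j with ⟨l, rfl | rfl⟩ <;>
      simp only [← add_assoc, ← mul_add]
    · rw [prec_double, prec_double]
      exact H k (by omega) l (by omega)
    · rw [prec_even_odd, prec_even_odd, letters l (by omega)]
    · rw [prec_odd_even, prec_odd_even, letters k (by omega)]
    · rw [prec_odd_odd, prec_odd_odd, letters k (by omega), letters l (by omega),
        H k (by omega) l (by omega)]
  · intro H i hi j hj
    have h := H (2 * i) (by omega) (2 * j) (by omega)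
    rwa [← mul_add, ← mul_add, ← mul_add, ← mul_add, prec_double, prec_double] at h
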